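/- For monic f ∈ F_q[t] and integers n, the sum over square-free monic D of degree 2g+1 coprime to Δ of χ_D(f) can be expressed via sums over all monic polynomials: Σ_{D ∈ H*_{2g+1}} χ_D(f) = Σ_{C_1 | Δ} μ(C_1) χ_{C_1}(f) Σ_{C_2 | (Δf)^∞} Σ_{R monic, deg R = 2g+1−deg C_1 − 2 deg C_2} χ_R(f) − q Σ_{C_1 | Δ} μ(C_1) χ_{C_1}(f) Σ_{C_2 | (Δf)^∞} Σ_{R monic, deg R = 2g−1−deg C_1 − 2 deg C_2} χ_R(f). -/

import Mathlib

open Polynomial UniqueFactorizationMonoid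

open Classical in
/-- Quadratic residue symbol `(f/P)` for `P` a monic irreducible polynomial:
`0` if `P ∣ f`, `1` if `f` is a nonzero square mod `P`, `-1` otherwise. -/
noncomputable def legSym {F : Type*} [Field F] (P f : Polynomial F) : ℤ :=
  if P ∣ f then 0 else if ∃ g, P ∣ (g * g - f) then 1 else -1

/-- The quadratic character `χ_m(a) = (a/m)`, extended multiplicatively over the
irreducible factors of the modulus `m`. -/
noncomputable def jacSym {F : Type*} [Field F] (a m : Polynomial F) : ℤ :=
  ((factors m).map (fun P => legSym P a)).prod

open Classical in
/-- The Möbius function on `F_q[t]`. -/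
noncomputable def polyMoebius {F : Type*} [Field F] (f : Polynomial F) : ℤ :=
  if Squarefree f then (-1) ^ Multiset.card (factors f) else 0

open Filter Function
open scoped PowerSeries LaurentSeries PowerSeries.WithPiTopology

/-!
Read every sum as a coefficient of a power series in `u` graded by degree: let `S` and `L` be the
series of `χ` over the square-free `D` coprime to `Δ` and over all monic polynomials, and let `M` be
the series `∑_{C₁ ∣ Δ} μ(C₁) χ(C₁) u^(deg C₁)`.

* By Möbius inversion, `M L` is the series of `χ` over the monic polynomials coprime to `Δ`.
* Writing such a polynomial as `D E²` with `D` square-free, that series is `S · E(u²)`, where `E(u)`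
  counts the monic polynomials coprime to `Δ f`: `χ(E)²` is `1` or `0` according to whether `E` is
  coprime to `f`.
* Splitting a monic polynomial into a part composed of primes dividing `Δ f` and a part coprime to
  `Δ f` gives `C(u) E(u) = ∑ₙ qⁿ uⁿ = 1 / (1 - q u)`, where `C(u)` counts the `C₂ ∣ (Δ f)^∞`.

Hence `S = (1 - q u²) M C(u²) L`. Comparing Laurent coefficients rather than coefficients of power
series makes the terms with a negative degree vanish without case distinctions.
-/

section GeneratingSeries

variable {ι κ R : Type*} [CommRing R] [TopologicalSpace R]

/-- The generating series `∑ᵢ w(i) u^(d(i))` of a weight `w` graded by `d`. It is meant for gradings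
`d` with finite fibres, for which the sum converges coefficientwise. -/
noncomputable def genSeries (d : ι → ℕ) (w : ι → R) : R⟦X⟧ :=
  ∑' i, PowerSeries.monomial (d i) (w i)

lemma summable_monomial (d : ι → ℕ) [TendstoCofinite d] (w : ι → R) :
    Summable fun i ↦ PowerSeries.monomial (d i) (w i) := by
  refine (PowerSeries.WithPiTopology.summable_iff_summable_coeff R).2 fun n ↦
    summable_of_hasFiniteSupport
      ((TendstoCofinite.finite_preimage_singleton d n).subset fun i hi ↦ ?_)
  by_contra hne
  exact hi ((PowerSeries.coeff_monomial ..).trans (if_neg (Ne.symm hne)))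

instance tendstoCofinite_add (d : ι → ℕ) (e : κ → ℕ) [TendstoCofinite d] [TendstoCofinite e] :
    TendstoCofinite fun p : ι × κ ↦ d p.1 + e p.2 := by
  refine (tendstoCofinite_iff_finite_preimage_singleton _).2 fun n ↦ ?_
  refine ((TendstoCofinite.finite_preimage d (Set.finite_Iic n)).prod
    (TendstoCofinite.finite_preimage e (Set.finite_Iic n))).subset ?_
  rintro ⟨i, j⟩ hij
  simp only [Set.mem_preimage, Set.mem_singleton_iff, Set.mem_prod, Set.mem_Iic] at hij ⊢
  omega

lemma genSeries_eq_of_injective {d : ι → ℕ} {e : κ → ℕ} {v : ι → R} {w : κ → R} {φ : ι → κ}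
    (hφ : Injective φ) (hd : ∀ i, e (φ i) = d i) (hw : ∀ i, w (φ i) = v i)
    (hsupp : support w ⊆ Set.range φ) : genSeries d v = genSeries e w := by
  have hsupp' : (support fun k ↦ PowerSeries.monomial (e k) (w k)) ⊆ Set.range φ :=
    fun k hk ↦ hsupp fun hwk ↦ hk (by simp only [hwk, map_zero])
  simpa only [genSeries, hd, hw] using hφ.tsum_eq hsupp'

variable [IsTopologicalRing R] [T2Space R]

lemma genSeries_mul_genSeries (d : ι → ℕ) (e : κ → ℕ) [TendstoCofinite d] [TendstoCofinite e]
    (v : ι → R) (w : κ → R) :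
    genSeries d v * genSeries e w =
      genSeries (fun p : ι × κ ↦ d p.1 + e p.2) fun p ↦ v p.1 * w p.2 := by
  have hprod := summable_monomial (fun p : ι × κ ↦ d p.1 + e p.2) fun p ↦ v p.1 * w p.2
  simp only [← PowerSeries.monomial_mul_monomial] at hprod
  simpa only [genSeries, ← PowerSeries.monomial_mul_monomial] using
    (summable_monomial d v).tsum_mul_tsum (summable_monomial e w) hprod

lemma genSeries_eq_fiberwise (d : ι → ℕ) [TendstoCofinite d] (w : ι → R) (e : κ → ℕ) (π : ι → κ)
    (he : ∀ i, e (π i) = d i) :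
    genSeries d w = genSeries e fun k ↦ ∑' i : {i // π i = k}, w i := by
  have finite_fiber (k : κ) : Finite {i // π i = k} :=
    (TendstoCofinite.finite_preimage_singleton d (e k)).subset
      fun i (hi : π i = k) ↦ by simp [← hi, he]
  calc genSeries d w
      = ∑' (k : κ) (i : {i // π i = k}), PowerSeries.monomial (d i) (w i) := by
        rw [genSeries, ← (Equiv.sigmaFiberEquiv π).tsum_eq]
        exact ((Equiv.sigmaFiberEquiv π).summable_iff.2 (summable_monomial d w)).tsum_sigma'
          fun k ↦ Summable.of_finite
    _ = genSeries e fun k ↦ ∑' i : {i // π i = k}, w i := by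
        refine tsum_congr fun k ↦ ?_
        have := Fintype.ofFinite {i // π i = k}
        simp only [tsum_fintype, map_sum]
        refine Finset.sum_congr rfl fun i _ ↦ ?_
        rw [← he, i.2]

lemma genSeries_mul_genSeries_eq_fiberwise {ν : Type*} (d : ι → ℕ) (e : κ → ℕ) [TendstoCofinite d]
    [TendstoCofinite e] (v : ι → R) (w : κ → R) (c : ν → ℕ) (π : ι × κ → ν)
    (hc : ∀ p, c (π p) = d p.1 + e p.2) :
    genSeries d v * genSeries e w =
      genSeries c fun k ↦ ∑' p : {p // π p = k}, v p.1.1 * w p.1.2 := by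
  rw [genSeries_mul_genSeries]
  exact genSeries_eq_fiberwise _ _ c π hc

end GeneratingSeries

section LaurentCoefficients

variable {ι R : Type*} [CommRing R]

lemma laurentCoeff_monomial_mul (n : ℕ) (a : R) (φ : R⟦X⟧) (z : ℤ) :
    ((PowerSeries.monomial n a * φ : R⟦X⟧) : R⸨X⸩).coeff z = a * (φ : R⸨X⸩).coeff (z - n) := by
  have coe_monomial : ((PowerSeries.monomial n a : R⟦X⟧) : R⸨X⸩) = HahnSeries.single (n : ℤ) a := by
    simp [PowerSeries.monomial_eq_C_mul_X_pow, HahnSeries.C_apply]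
  rw [PowerSeries.coe_mul, coe_monomial, HahnSeries.coeff_single_mul]

variable [TopologicalSpace R]

lemma continuous_laurentCoeff (z : ℤ) : Continuous fun φ : R⟦X⟧ ↦ (φ : R⸨X⸩).coeff z := by
  simp only [PowerSeries.coeff_coe]
  split_ifs
  · exact continuous_const
  · exact PowerSeries.WithPiTopology.continuous_coeff R _

variable [IsTopologicalRing R] [T2Space R]

lemma laurentCoeff_genSeries_mul (d : ι → ℕ) [TendstoCofinite d] (w : ι → R) (φ : R⟦X⟧) (z : ℤ) :
    ((genSeries d w * φ : R⟦X⟧) : R⸨X⸩).coeff z = ∑' i, w i * (φ : R⸨X⸩).coeff (z - d i) := by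
  have hsum := ((summable_monomial d w).hasSum.mul_right φ).map
    ((HahnSeries.coeff.addMonoidHom z).comp (HahnSeries.ofPowerSeries ℤ R).toAddMonoidHom)
    (continuous_laurentCoeff z)
  exact hsum.tsum_eq.symm.trans (tsum_congr fun i ↦ laurentCoeff_monomial_mul _ _ _ _)

lemma laurentCoeff_genSeries (d : ι → ℕ) [TendstoCofinite d] (w : ι → R) (z : ℤ) :
    ((genSeries d w : R⟦X⟧) : R⸨X⸩).coeff z = ∑' i : {i // (d i : ℤ) = z}, w i := by
  classical
  have coeff_one (i : ι) :
      ((1 : R⟦X⟧) : R⸨X⸩).coeff (z - d i) = if (d i : ℤ) = z then 1 else 0 := by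
    simp [HahnSeries.coeff_one, sub_eq_zero, eq_comm]
  rw [← mul_one (genSeries d w), laurentCoeff_genSeries_mul]
  simp only [coeff_one, mul_ite, mul_one, mul_zero]
  simpa only [Set.indicator_apply] using! (tsum_subtype {i | (d i : ℤ) = z} w).symm

end LaurentCoefficients

section Factorization

variable {M : Type*} [CommMonoidWithZero M] [UniqueFactorizationMonoid M]

lemma exists_squarefree_mul_sq {a : M} (ha : a ≠ 0) : ∃ d e : M, Squarefree d ∧ d * e ^ 2 = a := by
  induction a using induction_on_prime with
  | h₁ => exact absurd rfl ha
  | h₂ u hu => exact ⟨u, 1, hu.squarefree, by simp⟩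
  | h₃ a p ha0 hp ih =>
    obtain ⟨d, e, hd, rfl⟩ := ih ha0
    by_cases hpd : p ∣ d
    · obtain ⟨c, rfl⟩ := hpd
      exact ⟨c, p * e, hd.of_mul_right, by simp only [sq, mul_assoc, mul_left_comm]⟩
    · have hrel : IsRelPrime p d := hp.irreducible.isRelPrime_iff_not_dvd.2 hpd
      exact ⟨p * d, e, squarefree_mul_iff.2 ⟨hrel, hp.squarefree, hd⟩, mul_assoc ..⟩

lemma dvd_of_sq_dvd_squarefree_mul_sq [Nontrivial M] {d e e' : M} (hd : Squarefree d)
    (h : e' ^ 2 ∣ d * e ^ 2) : e' ∣ e := by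
  by_cases he' : e' = 0
  · subst he'
    simpa [hd.ne_zero] using h
  refine (dvd_iff_emultiplicity_le he').2 fun p hp ↦ ?_
  have hle := emultiplicity_le_emultiplicity_of_dvd_right (a := p) h
  have hd1 : emultiplicity p d ≤ 1 :=
    ((squarefree_iff_emultiplicity_le_one d).1 hd p).resolve_right hp.not_isUnit
  rw [emultiplicity_mul hp, emultiplicity_pow hp, emultiplicity_pow hp] at hle
  generalize emultiplicity p d = l, emultiplicity p e = m, emultiplicity p e' = m' at hle hd1 ⊢
  lift l to ℕ using ne_top_of_le_ne_top ENat.one_ne_top hd1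
  cases m with
  | top => exact le_top
  | coe m =>
    have hfin : (l + 2 * m : ℕ∞) ≠ ⊤ := by exact_mod_cast ENat.natCast_ne_top (l + 2 * m)
    lift m' to ℕ using fun htop ↦ hfin (top_le_iff.1 (by simpa [htop] using hle))
    norm_cast at hle hd1 ⊢
    omega

/-- `c ∣ h^∞`, in the form that every prime factor of `c` divides `h`. -/
def PrimesDvd {A : Type*} [CommMonoidWithZero A] (c h : A) : Prop :=
  ∀ p : A, Prime p → p ∣ c → p ∣ h

variable {A : Type*} [CommRing A] [IsDomain A] [IsPrincipalIdealRing A]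

lemma exists_primesDvd_mul_isCoprime (h : A) {b : A} (hb : b ≠ 0) :
    ∃ c e : A, PrimesDvd c h ∧ IsCoprime e h ∧ c * e = b := by
  induction b using induction_on_prime with
  | h₁ => exact absurd rfl hb
  | h₂ u hu =>
    exact ⟨u, 1, fun p hp hpu ↦ absurd (isUnit_of_dvd_unit hpu hu) hp.not_isUnit,
      isCoprime_one_left, mul_one u⟩
  | h₃ b p hb0 hp ih =>
    obtain ⟨c, e, hc, he, rfl⟩ := ih hb0
    by_cases hph : p ∣ h
    · refine ⟨p * c, e, fun r hr hrpc ↦ ?_, he, mul_assoc ..⟩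
      rcases hr.dvd_or_dvd hrpc with hrp | hrc
      · exact (hr.associated_of_dvd hp hrp).dvd.trans hph
      · exact hc r hr hrc
    · exact ⟨c, p * e, hc, (hp.irreducible.coprime_iff_not_dvd.2 hph).mul_left he,
        mul_left_comm ..⟩

lemma PrimesDvd.isCoprime {c e h : A} (hc : PrimesDvd c h) (he : IsCoprime e h) (he0 : e ≠ 0) :
    IsCoprime c e :=
  isCoprime_of_prime_dvd (fun h0 ↦ he0 h0.2) fun _ hp hpc hpe ↦
    hp.not_isUnit (he.isUnit_of_dvd' hpe (hc _ hp hpc))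

end Factorization

section MonicFactorization

variable {F : Type*} [Field F]

lemma exists_monic_mul_pow {a b N : F[X]} (hN : N.Monic) {k : ℕ} (hk : k ≠ 0) (h : a * b ^ k = N) :
    ∃ a' b' : F[X], Associated a a' ∧ Associated b b' ∧ a'.Monic ∧ b'.Monic ∧ a' * b' ^ k = N := by
  classical
  subst h
  obtain ⟨ha, hb⟩ := mul_ne_zero_iff.1 hN.ne_zero
  have hma : (normalize a).Monic := monic_normalize ha
  have hmb : (normalize b).Monic := monic_normalize ((pow_ne_zero_iff hk).1 hb)
  exact ⟨normalize a, normalize b, associated_normalize a, associated_normalize b, hma, hmb,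
    eq_of_monic_of_associated (hma.mul (hmb.pow k)) hN
      ((normalize_associated a).mul_mul ((normalize_associated b).pow_pow))⟩

lemma exists_monic_squarefree_mul_sq {N : F[X]} (hN : N.Monic) :
    ∃ D E : F[X], D.Monic ∧ Squarefree D ∧ E.Monic ∧ D * E ^ 2 = N := by
  obtain ⟨d, e, hd, hde⟩ := exists_squarefree_mul_sq hN.ne_zero
  obtain ⟨D, E, hdD, -, hD, hE, hDE⟩ := exists_monic_mul_pow hN two_ne_zero hde
  exact ⟨D, E, hD, hdD.squarefree_iff.1 hd, hE, hDE⟩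

lemma monic_squarefree_mul_sq_unique {D E D' E' : F[X]} (hE : E.Monic) (hE' : E'.Monic)
    (hD : Squarefree D) (hD' : Squarefree D') (h : D * E ^ 2 = D' * E' ^ 2) :
    D = D' ∧ E = E' := by
  obtain rfl : E = E' := eq_of_monic_of_associated hE hE' <| associated_of_dvd_dvd
    (dvd_of_sq_dvd_squarefree_mul_sq hD' (Dvd.intro_left _ h))
    (dvd_of_sq_dvd_squarefree_mul_sq hD (Dvd.intro_left _ h.symm))
  exact ⟨mul_right_cancel₀ (pow_ne_zero 2 hE.ne_zero) h, rfl⟩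

lemma exists_monic_primesDvd_mul_isCoprime (h : F[X]) {N : F[X]} (hN : N.Monic) :
    ∃ C E : F[X], C.Monic ∧ PrimesDvd C h ∧ E.Monic ∧ IsCoprime E h ∧ C * E = N := by
  obtain ⟨c, e, hc, he, hce⟩ := exists_primesDvd_mul_isCoprime h hN.ne_zero
  obtain ⟨C, E, hcC, heE, hC, hE, hCE⟩ :=
    exists_monic_mul_pow hN one_ne_zero ((congrArg (c * ·) (pow_one e)).trans hce)
  exact ⟨C, E, hC, fun p hp hpC ↦ hc p hp (hpC.trans hcC.dvd'), hE,
    he.of_isCoprime_of_dvd_left heE.dvd', by simpa using hCE⟩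

lemma monic_primesDvd_mul_isCoprime_unique {h C E C' E' : F[X]} (hC : C.Monic) (hE : E.Monic)
    (hC' : C'.Monic) (hE' : E'.Monic) (hCh : PrimesDvd C h) (hEh : IsCoprime E h)
    (hCh' : PrimesDvd C' h) (hEh' : IsCoprime E' h) (heq : C * E = C' * E') :
    C = C' ∧ E = E' := by
  obtain rfl : C = C' := eq_of_monic_of_associated hC hC' <| associated_of_dvd_dvd
    ((hCh.isCoprime hEh' hE'.ne_zero).dvd_of_dvd_mul_right (Dvd.intro _ heq))
    ((hCh'.isCoprime hEh hE.ne_zero).dvd_of_dvd_mul_right (Dvd.intro _ heq.symm))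
  exact ⟨rfl, mul_left_cancel₀ hC.ne_zero heq⟩

end MonicFactorization

section Moebius

variable {F : Type*} [Field F]

lemma normalizedFactors_prod_of_monic_irreducible [DecidableEq F] {s : Finset F[X]}
    (hs : ∀ P ∈ s, P.Monic ∧ Irreducible P) : normalizedFactors (∏ P ∈ s, P) = s.val := by
  have h := normalizedFactors_prod_eq s.val fun P hP ↦ (hs P hP).2
  rw [Multiset.map_congr rfl fun P hP ↦ (hs P hP).1.normalize_eq_self, Multiset.map_id',
    Finset.prod_val] at h
  exact h

lemma polyMoebius_prod {s : Finset F[X]} (hs : ∀ P ∈ s, P.Monic ∧ Irreducible P) :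
    polyMoebius (∏ P ∈ s, P) = (-1) ^ s.card := by
  classical
  have hfac := normalizedFactors_prod_of_monic_irreducible hs
  have hne : ∏ P ∈ s, P ≠ 0 := Finset.prod_ne_zero_iff.2 fun P hP ↦ (hs P hP).2.ne_zero
  have hsq : Squarefree (∏ P ∈ s, P) :=
    (squarefree_iff_nodup_normalizedFactors hne).2 (hfac ▸ s.nodup)
  have hcard : (factors (∏ P ∈ s, P)).card = s.card := by
    rw [Finset.card_def, ← hfac, normalizedFactors, Multiset.card_map]
  rw [polyMoebius, if_pos hsq, hcard]

lemma monic_and_irreducible_of_mem_primeFactors [DecidableEq F] {G P : F[X]}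
    (hP : P ∈ primeFactors G) : P.Monic ∧ Irreducible P := by
  have hmem := mem_primeFactors.1 hP
  have hirr := irreducible_of_normalized_factor P hmem
  exact ⟨normalize_normalized_factor P hmem ▸ monic_normalize hirr.ne_zero, hirr⟩

lemma prod_primeFactors_of_monic_squarefree [DecidableEq F] {C : F[X]} (hC : C.Monic)
    (hsq : Squarefree C) : ∏ P ∈ primeFactors C, P = C :=
  eq_of_monic_of_associated
    (monic_prod_of_monic _ _ fun _ hP ↦ (monic_and_irreducible_of_mem_primeFactors hP).1) hC
    (radical_associated hsq.isRadical hC.ne_zero)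

open Classical in
lemma tsum_polyMoebius_dvd {G : F[X]} (hG : G ≠ 0) :
    ∑' C : {C : F[X] // C.Monic ∧ C ∣ G}, polyMoebius C.1 = if IsUnit G then 1 else 0 := by
  have hprime (s : (primeFactors G).powerset) (P : F[X]) (hP : P ∈ s.1) :
      P.Monic ∧ Irreducible P :=
    monic_and_irreducible_of_mem_primeFactors (Finset.mem_powerset.1 s.2 hP)
  let φ (s : (primeFactors G).powerset) : {C : F[X] // C.Monic ∧ C ∣ G} :=
    ⟨∏ P ∈ s.1, P, monic_prod_of_monic _ _ fun P hP ↦ (hprime s P hP).1,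
      (Finset.prod_dvd_prod_of_subset _ _ _ (Finset.mem_powerset.1 s.2)).trans radical_dvd_self⟩
  have hinj : Injective φ := fun s t hst ↦ Subtype.ext <| Finset.val_injective <| by
    rw [← normalizedFactors_prod_of_monic_irreducible (hprime s),
      ← normalizedFactors_prod_of_monic_irreducible (hprime t)]
    exact congrArg (normalizedFactors ·.1) hst
  have hsupp : (support fun C : {C : F[X] // C.Monic ∧ C ∣ G} ↦ polyMoebius C.1) ⊆
      Set.range φ := fun ⟨C, hC, hCG⟩ hμ ↦ by
    have hsq : Squarefree C := by_contra fun hsq ↦ hμ (if_neg hsq)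
    have hsub : primeFactors C ⊆ primeFactors G :=
      (radical_dvd_iff_primeFactors_subset hG).1 (radical_dvd_self.trans hCG)
    exact ⟨⟨primeFactors C, Finset.mem_powerset.2 hsub⟩,
      Subtype.ext (prod_primeFactors_of_monic_squarefree hC hsq)⟩
  calc ∑' C : {C : F[X] // C.Monic ∧ C ∣ G}, polyMoebius C.1
      = ∑' s : (primeFactors G).powerset, (-1) ^ s.1.card := by
        rw [← hinj.tsum_eq hsupp]
        exact tsum_congr fun s ↦ polyMoebius_prod (hprime s)
    _ = ∑ s ∈ (primeFactors G).powerset, (-1) ^ s.card :=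
        Finset.tsum_subtype (primeFactors G).powerset fun s ↦ (-1 : ℤ) ^ s.card
    _ = if IsUnit G then 1 else 0 := by
        simp only [Finset.sum_powerset_neg_one_pow_card, primeFactors_eq_empty_iff hG]

end Moebius

section DegreeSeries

variable {F R : Type*} [Field F]

lemma card_monic_natDegree_eq (n : ℕ) :
    Nat.card {N : F[X] // N.Monic ∧ N.natDegree = n} = Nat.card F ^ n := by
  rw [Nat.card_congr ((monicEquivDegreeLT n).trans (degreeLTEquiv F n).toEquiv), Nat.card_fun,
    Nat.card_fin]

instance tendstoCofinite_natDegree [Finite F] : TendstoCofinite (natDegree : F[X] → ℕ) := by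
  refine (tendstoCofinite_iff_finite_preimage_singleton _).2 fun n ↦ ?_
  have : Finite (degreeLT F (n + 1)) := Finite.of_equiv _ (degreeLTEquiv F (n + 1)).toEquiv.symm
  refine (Set.toFinite (degreeLT F (n + 1) : Set F[X])).subset fun N hN ↦ ?_
  have hdeg : N.natDegree < n + 1 := Nat.lt_succ_of_le (Set.mem_singleton_iff.1 hN).le
  exact mem_degreeLT.2 (degree_le_natDegree.trans_lt (WithBot.coe_lt_coe.2 hdeg))

instance tendstoCofinite_mul_natDegree [Finite F] (k : ℕ) [NeZero k] (p : F[X] → Prop) :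
    TendstoCofinite fun N : {N : F[X] // p N} ↦ k * N.1.natDegree := by
  refine (tendstoCofinite_iff_finite_preimage_singleton _).2 fun n ↦ ?_
  refine ((TendstoCofinite.finite_preimage natDegree (Set.finite_Iic n)).preimage
    Subtype.val_injective.injOn).subset fun N hN ↦ ?_
  exact (Nat.le_mul_of_pos_left _ (NeZero.pos k)).trans (Set.mem_singleton_iff.1 hN).le

lemma finite_monic_dvd [Finite F] {G : F[X]} (hG : G ≠ 0) :
    Finite {C : F[X] // C.Monic ∧ C ∣ G} :=
  (TendstoCofinite.finite_preimage natDegree (Set.finite_Iic G.natDegree)).subset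
    fun _ hC ↦ natDegree_le_of_dvd hC.2 hG

variable [CommRing R] [TopologicalSpace R]

/-- The generating series `∑ w(N) u^(k deg N)` over the polynomials `N` satisfying `p`. -/
noncomputable def degSeries (k : ℕ) (p : F[X] → Prop) (w : F[X] → R) : R⟦X⟧ :=
  genSeries (fun N : {N : F[X] // p N} ↦ k * N.1.natDegree) fun N ↦ w N

lemma degSeries_eq_of_subset {k : ℕ} {p q : F[X] → Prop} {v w : F[X] → R} (hpq : ∀ N, p N → q N)
    (hvw : ∀ N, p N → w N = v N) (hsupp : ∀ N, q N → w N ≠ 0 → p N) :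
    degSeries k p v = degSeries k q w :=
  genSeries_eq_of_injective (φ := Subtype.map id hpq) (Subtype.map_injective hpq injective_id)
    (fun _ ↦ rfl) (fun N ↦ hvw N N.2) fun N hN ↦ ⟨⟨N, hsupp N N.2 hN⟩, rfl⟩

variable [Finite F] [IsTopologicalRing R] [T2Space R]

lemma degSeries_mul_degSeries {k e : ℕ} [NeZero k] [NeZero e] {p q r : F[X] → Prop}
    {v w x : F[X] → R} (hp : ∀ a, p a → a.Monic) (hq : ∀ b, q b → b.Monic)
    (hr : ∀ a b, p a → q b → r (a * b ^ e))
    (hunique : ∀ a b a' b', p a → q b → p a' → q b' → a * b ^ e = a' * b' ^ e → a = a' ∧ b = b')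
    (hexists : ∀ c, r c → x c ≠ 0 → ∃ a b, p a ∧ q b ∧ a * b ^ e = c)
    (hx : ∀ a b, p a → q b → x (a * b ^ e) = v a * w b) :
    degSeries k p v * degSeries (k * e) q w = degSeries k r x := by
  rw [degSeries, degSeries, genSeries_mul_genSeries]
  refine genSeries_eq_of_injective
    (φ := fun c : {a // p a} × {b // q b} ↦ ⟨c.1 * c.2 ^ e, hr _ _ c.1.2 c.2.2⟩) ?_ ?_ ?_ ?_
  · rintro ⟨⟨a, ha⟩, ⟨b, hb⟩⟩ ⟨⟨a', ha'⟩, ⟨b', hb'⟩⟩ h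
    obtain ⟨rfl, rfl⟩ := hunique a b a' b' ha hb ha' hb' (congrArg Subtype.val h)
    rfl
  · rintro ⟨⟨a, ha⟩, ⟨b, hb⟩⟩
    dsimp only
    rw [(hp a ha).natDegree_mul ((hq b hb).pow e), (hq b hb).natDegree_pow, mul_add, mul_assoc]
  · exact fun c ↦ hx _ _ c.1.2 c.2.2
  · rintro ⟨c, hc⟩ hxc
    obtain ⟨a, b, ha, hb, rfl⟩ := hexists c hc hxc
    exact ⟨⟨⟨a, ha⟩, ⟨b, hb⟩⟩, rfl⟩

lemma degSeries_monic_mul_one_sub (k : ℕ) [NeZero k] :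
    degSeries k (Monic : F[X] → Prop) (1 : F[X] → R) *
      (1 - PowerSeries.monomial k (Nat.card F : R)) = 1 := by
  have hcard (n : ℕ) : ∑' _ : {N : {N : F[X] // N.Monic} // N.1.natDegree = n}, (1 : R) =
      (Nat.card F : R) ^ n := by
    rw [tsum_const, Nat.card_congr (Equiv.subtypeSubtypeEquivSubtypeInter Monic (natDegree · = n)),
      card_monic_natDegree_eq, nsmul_one, Nat.cast_pow]
  have hgeom : degSeries k (Monic : F[X] → Prop) (1 : F[X] → R) =
      ∑' n : ℕ, PowerSeries.monomial k (Nat.card F : R) ^ n := by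
    rw [degSeries, genSeries_eq_fiberwise _ _ (k * ·)
      (fun N : {N : F[X] // N.Monic} ↦ N.1.natDegree) fun _ ↦ rfl, genSeries]
    exact tsum_congr fun n ↦ by
      simp only [Pi.one_apply, hcard, PowerSeries.monomial_pow, mul_comm k]
  rw [hgeom]
  exact PowerSeries.WithPiTopology.tsum_pow_mul_one_sub_of_constantCoeff_eq_zero
    (by simp [← PowerSeries.coeff_zero_eq_constantCoeff_apply, PowerSeries.coeff_monomial,
      NeZero.ne' k])

lemma degSeries_primesDvd_mul_isCoprime (k : ℕ) [NeZero k] (ψ : F[X] →* R) (h : F[X]) :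
    degSeries k (fun C ↦ C.Monic ∧ PrimesDvd C h) ψ *
      degSeries k (fun E ↦ E.Monic ∧ IsCoprime E h) ψ = degSeries k Monic ψ := by
  have hmul := degSeries_mul_degSeries (k := k) (e := 1) (p := fun C ↦ C.Monic ∧ PrimesDvd C h)
    (q := fun E ↦ E.Monic ∧ IsCoprime E h) (r := Monic) (v := ψ) (w := ψ) (x := ψ)
    (fun _ hC ↦ hC.1) (fun _ hE ↦ hE.1) (fun C E hC hE ↦ hC.1.mul (hE.1.pow 1))
  simp only [pow_one, mul_one, map_mul] at hmul
  refine hmul ?_ ?_ fun _ _ _ _ ↦ trivial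
  · rintro C E C' E' ⟨hC, hCh⟩ ⟨hE, hEh⟩ ⟨hC', hCh'⟩ ⟨hE', hEh'⟩
    exact monic_primesDvd_mul_isCoprime_unique hC hE hC' hE' hCh hEh hCh' hEh'
  · rintro N hN -
    obtain ⟨C, E, hC, hCh, hE, hEh, hCE⟩ := exists_monic_primesDvd_mul_isCoprime h hN
    exact ⟨C, E, ⟨hC, hCh⟩, ⟨hE, hEh⟩, hCE⟩

lemma laurentCoeff_degSeries_mul (k : ℕ) [NeZero k] (p : F[X] → Prop) (w : F[X] → R) (φ : R⟦X⟧)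
    (z : ℤ) : ((degSeries k p w * φ : R⟦X⟧) : R⸨X⸩).coeff z =
      ∑' N : {N : F[X] // p N}, w N * (φ : R⸨X⸩).coeff (z - k * N.1.natDegree) := by
  simpa only [Nat.cast_mul] using! laurentCoeff_genSeries_mul
    (fun N : {N : F[X] // p N} ↦ k * N.1.natDegree) (fun N ↦ w N) φ z

lemma laurentCoeff_degSeries_one (p : F[X] → Prop) (w : F[X] → R) (z : ℤ) :
    ((degSeries 1 p w : R⟦X⟧) : R⸨X⸩).coeff z =
      ∑' N : {N : F[X] // p N ∧ (N.natDegree : ℤ) = z}, w N := by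
  let e : {N : {N : F[X] // p N} // ((1 * N.1.natDegree : ℕ) : ℤ) = z} ≃
      {N : F[X] // p N ∧ (N.natDegree : ℤ) = z} :=
    (Equiv.subtypeSubtypeEquivSubtypeInter p fun N ↦ ((1 * N.natDegree : ℕ) : ℤ) = z).trans
      (Equiv.subtypeEquivRight fun N ↦ by rw [one_mul])
  exact (laurentCoeff_genSeries _ _ z).trans (e.tsum_eq fun N ↦ w N)

end DegreeSeries

section QuadraticCharacter

variable {F R : Type*} [Field F] [CommRing R]

/-- `χ` is a quadratic character modulo `m`: it vanishes off the units modulo `m` and takes square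
roots of `1` on them. Periodicity modulo `m` is not part of the notion. -/
structure IsQuadraticMod (χ : F[X] →* R) (m : F[X]) : Prop where
  map_eq_zero : ∀ {a : F[X]}, ¬IsCoprime a m → χ a = 0
  map_sq : ∀ {a : F[X]}, IsCoprime a m → χ a ^ 2 = 1

variable [TopologicalSpace R]

open Classical in
lemma tsum_polyMoebius_mul_of_mul_eq [Finite F] (χ : F[X] →* R) (Δ : F[X]) {N : F[X]}
    (hN : N.Monic) :
    ∑' c : {c : {C : F[X] // C.Monic ∧ C ∣ Δ} × {B : F[X] // B.Monic} // c.1.1 * c.2.1 = N},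
      (polyMoebius c.1.1.1 : R) * χ c.1.1.1 * χ c.1.2.1 = if IsCoprime N Δ then χ N else 0 := by
  let G := EuclideanDomain.gcd N Δ
  have hG : G ≠ 0 := fun h ↦ hN.ne_zero (EuclideanDomain.gcd_eq_zero_iff.1 h).1
  let φ (c : {c : {C : F[X] // C.Monic ∧ C ∣ Δ} × {B : F[X] // B.Monic} // c.1.1 * c.2.1 = N}) :
      {C : F[X] // C.Monic ∧ C ∣ G} :=
    ⟨c.1.1.1, c.1.1.2.1, EuclideanDomain.dvd_gcd (Dvd.intro _ c.2) c.1.1.2.2⟩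
  have hφ : Bijective φ := by
    refine ⟨?_, fun ⟨C, hC, hCG⟩ ↦ ?_⟩
    · rintro ⟨⟨⟨C, hC, hCΔ⟩, ⟨B, hB⟩⟩, hCB⟩ ⟨⟨⟨C', hC', hCΔ'⟩, ⟨B', hB'⟩⟩, hCB'⟩ h
      obtain rfl : C = C' := congrArg Subtype.val h
      obtain rfl : B = B' := mul_left_cancel₀ hC.ne_zero (hCB.trans hCB'.symm)
      rfl
    · obtain ⟨B, rfl⟩ := hCG.trans (EuclideanDomain.gcd_dvd_left N Δ)
      exact ⟨⟨⟨⟨C, hC, hCG.trans (EuclideanDomain.gcd_dvd_right _ Δ)⟩,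
        ⟨B, hC.of_mul_monic_left hN⟩⟩, rfl⟩, rfl⟩
  have : Fintype {C : F[X] // C.Monic ∧ C ∣ G} :=
    have := finite_monic_dvd hG
    Fintype.ofFinite _
  calc _ = ∑' C : {C : F[X] // C.Monic ∧ C ∣ G}, (polyMoebius C.1 : R) * χ N := by
        rw [← (Equiv.ofBijective φ hφ).tsum_eq]
        exact tsum_congr fun c ↦ by rw [mul_assoc, ← map_mul, c.2]; rfl
    _ = ((∑' C : {C : F[X] // C.Monic ∧ C ∣ G}, polyMoebius C.1 : ℤ) : R) * χ N := by
        rw [tsum_fintype, tsum_fintype, Int.cast_sum, Finset.sum_mul]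
    _ = if IsCoprime N Δ then χ N else 0 := by
        simp only [tsum_polyMoebius_dvd hG, G, EuclideanDomain.gcd_isUnit_iff, Int.cast_ite,
          Int.cast_one, Int.cast_zero, ite_mul, one_mul, zero_mul]

variable [Finite F] [IsTopologicalRing R] [T2Space R]

lemma degSeries_polyMoebius_mul (χ : F[X] →* R) (Δ : F[X]) :
    degSeries 1 (fun C ↦ C.Monic ∧ C ∣ Δ) (fun C ↦ (polyMoebius C : R) * χ C) *
      degSeries 1 Monic χ = degSeries 1 (fun N ↦ N.Monic ∧ IsCoprime N Δ) χ := by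
  classical
  calc _ = degSeries 1 Monic fun N ↦ if IsCoprime N Δ then χ N else 0 := by
        refine (genSeries_mul_genSeries_eq_fiberwise _ _ _ _
          (fun N : {N : F[X] // N.Monic} ↦ 1 * N.1.natDegree)
          (fun c ↦ ⟨c.1.1 * c.2.1, c.1.2.1.mul c.2.2⟩)
          fun c ↦ by rw [c.1.2.1.natDegree_mul c.2.2, mul_add]).trans ?_
        refine congrArg _ (funext fun N ↦ ?_)
        refine Eq.trans ?_ (tsum_polyMoebius_mul_of_mul_eq χ Δ N.2)
        exact tsum_congr_subtype
          (fun c : {C : F[X] // C.Monic ∧ C ∣ Δ} × {B : F[X] // B.Monic} ↦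
            (polyMoebius c.1.1 : R) * χ c.1.1 * χ c.2.1) fun c ↦ Subtype.ext_iff
    _ = degSeries 1 (fun N ↦ N.Monic ∧ IsCoprime N Δ) χ :=
        (degSeries_eq_of_subset (fun _ hN ↦ hN.1) (fun _ hN ↦ if_pos hN.2) fun _ hN hχ ↦
          ⟨hN, by_contra fun hcop ↦ hχ (if_neg hcop)⟩).symm

variable {χ : F[X] →* R} {m : F[X]}

lemma IsQuadraticMod.degSeries_squarefree_mul (hχ : IsQuadraticMod χ m) (Δ : F[X]) :
    degSeries 1 (fun D ↦ D.Monic ∧ Squarefree D ∧ IsCoprime D Δ) χ *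
      degSeries 2 (fun E ↦ E.Monic ∧ IsCoprime E (Δ * m)) 1 =
    degSeries 1 (fun N ↦ N.Monic ∧ IsCoprime N Δ) χ := by
  refine degSeries_mul_degSeries (k := 1) (e := 2) (fun _ hD ↦ hD.1) (fun _ hE ↦ hE.1) ?_ ?_ ?_ ?_
  · rintro D E ⟨hD, -, hDΔ⟩ ⟨hE, hEΔm⟩
    exact ⟨hD.mul (hE.pow 2), hDΔ.mul_left hEΔm.of_mul_right_left.pow_left⟩
  · rintro D E D' E' ⟨-, hD, -⟩ ⟨hE, -⟩ ⟨-, hD', -⟩ ⟨hE', -⟩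
    exact monic_squarefree_mul_sq_unique hE hE' hD hD'
  · rintro N ⟨hN, hNΔ⟩ hχN
    have hNm : IsCoprime N m := by_contra fun hNm ↦ hχN (hχ.map_eq_zero hNm)
    obtain ⟨D, E, hD, hDsq, hE, rfl⟩ := exists_monic_squarefree_mul_sq hN
    exact ⟨D, E, ⟨hD, hDsq, hNΔ.of_mul_left_left⟩,
      ⟨hE, (IsCoprime.pow_left_iff two_pos).1 (hNΔ.mul_right hNm).of_mul_left_right⟩, rfl⟩
  · rintro D E - ⟨-, hE⟩
    rw [map_mul, map_pow, hχ.map_sq hE.of_mul_right_right, Pi.one_apply]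

theorem IsQuadraticMod.degSeries_squarefree (hχ : IsQuadraticMod χ m) (Δ : F[X]) :
    degSeries 1 (fun D ↦ D.Monic ∧ Squarefree D ∧ IsCoprime D Δ) χ =
      (1 - PowerSeries.monomial 2 (Nat.card F : R)) *
        (degSeries 1 (fun C₁ ↦ C₁.Monic ∧ C₁ ∣ Δ) (fun C₁ ↦ (polyMoebius C₁ : R) * χ C₁) *
          (degSeries 2 (fun C₂ ↦ C₂.Monic ∧ PrimesDvd C₂ (Δ * m)) 1 * degSeries 1 Monic χ)) := by
  have hzeta := degSeries_monic_mul_one_sub (F := F) (R := R) 2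
  have hsplit : degSeries 2 _ 1 * degSeries 2 _ 1 = degSeries 2 Monic 1 :=
    degSeries_primesDvd_mul_isCoprime 2 (1 : F[X] →* R) (Δ * m)
  have hsq := hχ.degSeries_squarefree_mul Δ
  have hmoebius := degSeries_polyMoebius_mul χ Δ
  rw [← hsplit] at hzeta
  rw [mul_left_comm (degSeries 1 _ _), hmoebius, ← hsq]
  linear_combination
    -degSeries 1 (fun D ↦ D.Monic ∧ Squarefree D ∧ IsCoprime D Δ) χ * hzeta

theorem char_sum_squarefree_to_monic_general (hχ : IsQuadraticMod χ m) (Δ : F[X]) (n : ℕ) :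
    ∑' D : {D : F[X] // D.Monic ∧ Squarefree D ∧ IsCoprime D Δ ∧ D.natDegree = n}, χ D =
    (∑' C₁ : {C₁ : F[X] // C₁.Monic ∧ C₁ ∣ Δ}, (polyMoebius C₁.1 : R) * χ C₁ *
      ∑' C₂ : {C₂ : F[X] // C₂.Monic ∧ PrimesDvd C₂ (Δ * m)},
        ∑' B : {B : F[X] // B.Monic ∧
          (B.natDegree : ℤ) = n - C₁.1.natDegree - 2 * C₂.1.natDegree}, χ B) -
    (Nat.card F : R) * ∑' C₁ : {C₁ : F[X] // C₁.Monic ∧ C₁ ∣ Δ}, (polyMoebius C₁.1 : R) * χ C₁ *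
      ∑' C₂ : {C₂ : F[X] // C₂.Monic ∧ PrimesDvd C₂ (Δ * m)},
        ∑' B : {B : F[X] // B.Monic ∧
          (B.natDegree : ℤ) = n - 2 - C₁.1.natDegree - 2 * C₂.1.natDegree}, χ B := by
  have hcoeff := congrArg (fun φ : R⟦X⟧ ↦ (φ : R⸨X⸩).coeff (n : ℤ)) (hχ.degSeries_squarefree Δ)
  simp only [sub_mul, one_mul, PowerSeries.coe_sub, HahnSeries.coeff_sub,
    laurentCoeff_monomial_mul, laurentCoeff_degSeries_mul, laurentCoeff_degSeries_one,
    Pi.one_apply, Nat.cast_one, Nat.cast_ofNat] at hcoeff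
  rw [← hcoeff]
  exact tsum_congr_subtype χ fun D ↦ by rw [Nat.cast_inj, and_assoc, and_assoc]

end QuadraticCharacter

section QuadraticSymbol

variable {F : Type*} [Field F]

lemma isSquare_adjoinRoot_mk_iff {P a : F[X]} :
    IsSquare (AdjoinRoot.mk P a) ↔ ∃ g, P ∣ g * g - a := by
  refine (AdjoinRoot.mk_surjective (g := P)).exists.trans (exists_congr fun g ↦ ?_)
  rw [← map_mul, eq_comm, AdjoinRoot.mk_eq_mk]

lemma legSym_eq_quadraticCharFun (P a : F[X]) [Fact (Irreducible P)] [Fintype (AdjoinRoot P)]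
    [DecidableEq (AdjoinRoot P)] :
    legSym P a = quadraticCharFun (AdjoinRoot P) (AdjoinRoot.mk P a) := by
  classical
  simp only [legSym, quadraticCharFun, AdjoinRoot.mk_eq_zero, isSquare_adjoinRoot_mk_iff]

lemma legSym_mul [Finite F] {P : F[X]} (hP : Prime P) (a b : F[X]) :
    legSym P (a * b) = legSym P a * legSym P b := by
  classical
  have : Fact (Irreducible P) := ⟨hP.irreducible⟩
  have : Module.Finite F (AdjoinRoot P) := (AdjoinRoot.powerBasis hP.ne_zero).finite
  have : Fintype (AdjoinRoot P) := @Fintype.ofFinite _ (Module.finite_of_finite F)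
  simp only [legSym_eq_quadraticCharFun, map_mul, quadraticCharFun_mul]

lemma legSym_sq_of_not_dvd {P a : F[X]} (hPa : ¬P ∣ a) : legSym P a ^ 2 = 1 := by
  rw [legSym, if_neg hPa]
  split_ifs <;> norm_num

lemma legSym_one {P : F[X]} (hP : Prime P) : legSym P 1 = 1 := by
  rw [legSym, if_neg fun h ↦ hP.not_isUnit (isUnit_of_dvd_one h), if_pos ⟨1, by simp⟩]

/-- The quadratic character `a ↦ (a/m)` as a monoid homomorphism. -/
noncomputable def jacSymHom [Finite F] (m : F[X]) : F[X] →* ℤ where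
  toFun a := jacSym a m
  map_one' := Multiset.prod_eq_one fun x hx ↦ by
    obtain ⟨P, hP, rfl⟩ := Multiset.mem_map.1 hx
    exact legSym_one (prime_of_factor P hP)
  map_mul' a b := by
    simp only [jacSym, ← Multiset.prod_map_mul]
    exact congrArg _ (Multiset.map_congr rfl fun P hP ↦ legSym_mul (prime_of_factor P hP) a b)

lemma jacSym_eq_zero {a m : F[X]} (hm : m ≠ 0) (h : ¬IsCoprime a m) : jacSym a m = 0 := by
  obtain ⟨P, hP, hPa, hPm⟩ : ∃ P, Prime P ∧ P ∣ a ∧ P ∣ m := by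
    by_contra! hdvd
    exact h (isCoprime_of_prime_dvd (fun h0 ↦ hm h0.2) hdvd)
  obtain ⟨Q, hQ, hPQ⟩ := exists_mem_factors_of_dvd hm hP.irreducible hPm
  exact Multiset.prod_eq_zero (Multiset.mem_map.2 ⟨Q, hQ, if_pos (hPQ.symm.dvd.trans hPa)⟩)

lemma jacSym_sq {a m : F[X]} (h : IsCoprime a m) : jacSym a m ^ 2 = 1 := by
  rw [jacSym, ← Multiset.prod_map_pow]
  refine Multiset.prod_eq_one fun x hx ↦ ?_
  obtain ⟨P, hP, rfl⟩ := Multiset.mem_map.1 hx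
  exact legSym_sq_of_not_dvd fun hPa ↦
    (prime_of_factor P hP).not_isUnit (h.isUnit_of_dvd' hPa (dvd_of_mem_factors hP))

lemma isQuadraticMod_jacSymHom [Finite F] {m : F[X]} (hm : m ≠ 0) :
    IsQuadraticMod (jacSymHom m) m where
  map_eq_zero := jacSym_eq_zero hm
  map_sq := jacSym_sq

end QuadraticSymbol

/-- The character sum over square-free monic `D` of degree `2g+1` coprime to `Δ`
expressed via sums over all monic polynomials:
`∑_{D ∈ H*_{2g+1}} χ_D(f)
  = ∑_{C₁ ∣ Δ} μ(C₁) χ_{C₁}(f) ∑_{C₂ ∣ (Δf)^∞} ∑_{deg R = 2g+1-deg C₁-2 deg C₂} χ_R(f)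
  - q ∑_{C₁ ∣ Δ} μ(C₁) χ_{C₁}(f) ∑_{C₂ ∣ (Δf)^∞} ∑_{deg R = 2g-1-deg C₁-2 deg C₂} χ_R(f)`. -/
theorem char_sum_squarefree_to_monic {F : Type*} [Field F] [Fintype F]
    (hq4 : Fintype.card F % 4 = 1) (Δ f : Polynomial F) (hΔ : Δ ≠ 0) (hf : f.Monic)
    (g : ℕ) :
    ∑' D : {D : Polynomial F // D.Monic ∧ Squarefree (D : Polynomial F) ∧
        IsCoprime (D : Polynomial F) Δ ∧ (D : Polynomial F).natDegree = 2 * g + 1},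
      jacSym (D : Polynomial F) f =
    (∑' C₁ : {C₁ : Polynomial F // C₁.Monic ∧ C₁ ∣ Δ},
      polyMoebius (C₁ : Polynomial F) * jacSym (C₁ : Polynomial F) f *
        ∑' C₂ : {C₂ : Polynomial F // C₂.Monic ∧
            ∀ P : Polynomial F, Prime P → P ∣ (C₂ : Polynomial F) → P ∣ Δ * f},
          ∑' R : {R : Polynomial F // R.Monic ∧ ((R : Polynomial F).natDegree : ℤ) =
              2 * g + 1 - ((C₁ : Polynomial F).natDegree : ℤ) -
                2 * ((C₂ : Polynomial F).natDegree : ℤ)},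
            jacSym (R : Polynomial F) f) -
    (Fintype.card F : ℤ) *
    (∑' C₁ : {C₁ : Polynomial F // C₁.Monic ∧ C₁ ∣ Δ},
      polyMoebius (C₁ : Polynomial F) * jacSym (C₁ : Polynomial F) f *
        ∑' C₂ : {C₂ : Polynomial F // C₂.Monic ∧
            ∀ P : Polynomial F, Prime P → P ∣ (C₂ : Polynomial F) → P ∣ Δ * f},
          ∑' R : {R : Polynomial F // R.Monic ∧ ((R : Polynomial F).natDegree : ℤ) =
              2 * g - 1 - ((C₁ : Polynomial F).natDegree : ℤ) -
                2 * ((C₂ : Polynomial F).natDegree : ℤ)},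
            jacSym (R : Polynomial F) f) := by
  rw [← Nat.card_eq_fintype_card,
    show (2 * g - 1 : ℤ) = ((2 * g + 1 : ℕ) : ℤ) - 2 by push_cast; ring]
  exact char_sum_squarefree_to_monic_general (isQuadraticMod_jacSymHom hf.ne_zero) Δ (2 * g + 1)
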